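/- (Theorem.) Let r and s be pr-relations whose formulas depend only on disjoint variable sets V and W respectively, let q = r ⊎ s, let A ∈ PW(r) and B ∈ PW(s) be compatible, with event-variable formulas φ^r_A and ψ^s_B, and let ξ := φ^r_A ∧ ψ^s_B. Then ξ is the event-variable formula of the possible world A ∪ B of the epr-relation q: for every assignment μ, ξ μ = true if and only if μ is valid for q and q_μ = A ∪ B; equivalently, ξ is logically equivalent to Ξ^q_{A ∪ B}. -/

import Mathlib

open scoped Classical

variable {Var Tup : Type*}

/-- A pr-relation is functional: each tuple occurs in at most one tuple–formula pair. -/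
def Functional (r : Set (Tup × ((Var → Bool) → Bool))) : Prop :=
  ∀ t (f g : (Var → Bool) → Bool), (t, f) ∈ r → (t, g) ∈ r → f = g

/-- The tuple set `T(r)` of a pr-relation: the set of first components. -/
def tupleSet (r : Set (Tup × ((Var → Bool) → Bool))) : Set Tup :=
  Prod.fst '' r

/-- The possible world `r_μ` of a pr-relation under an assignment `μ`. -/
def world (r : Set (Tup × ((Var → Bool) → Bool))) (μ : Var → Bool) : Set Tup :=
  { t | ∃ f : (Var → Bool) → Bool, (t, f) ∈ r ∧ f μ = true }

/-- The possible worlds `PW(r)` of a pr-relation. -/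
def PW (r : Set (Tup × ((Var → Bool) → Bool))) : Set (Set Tup) :=
  { A | ∃ μ : Var → Bool, A = world r μ }

/-- `A ⊆ T` and `B ⊆ T'` are compatible if `A ∩ (T ∩ T') = B ∩ (T ∩ T')`. -/
def Compatible (T T' A B : Set Tup) : Prop :=
  A ∩ (T ∩ T') = B ∩ (T ∩ T')

/-- A formula depends only on the variables in `V`. -/
def DependsOnly (f : (Var → Bool) → Bool) (V : Set Var) : Prop :=
  ∀ μ μ' : Var → Bool, (∀ v ∈ V, μ v = μ' v) → f μ = f μ'

/-- The tuple–formula pairs of the integration `q = r ⊎ s`: pairs of `r`, together with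
the pairs of `s` whose tuple is not a tuple of `r` (for common tuples the formula is
taken from `r`). -/
def integ (r s : Set (Tup × ((Var → Bool) → Bool))) :
    Set (Tup × ((Var → Bool) → Bool)) :=
  r ∪ { p | p ∈ s ∧ p.1 ∉ tupleSet r }

/-- The event constraints of the integration `q = r ⊎ s`: the pairs `(f_t, g_t)` for
each common tuple `t`, where `f_t` and `g_t` are the formulas of `t` in `r` and `s`. -/
def integConstraints (r s : Set (Tup × ((Var → Bool) → Bool))) :
    Set (((Var → Bool) → Bool) × ((Var → Bool) → Bool)) :=
  { fg | ∃ t : Tup, (t, fg.1) ∈ r ∧ (t, fg.2) ∈ s }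

/-- An assignment is valid for the integration `r ⊎ s` if it satisfies every event
constraint `f_t ≡ g_t` coming from a common tuple `t`. -/
def ValidInteg (r s : Set (Tup × ((Var → Bool) → Bool))) (μ : Var → Bool) : Prop :=
  ∀ t (f g : (Var → Bool) → Bool), (t, f) ∈ r → (t, g) ∈ s → f μ = g μ

/-- The possible worlds of the integration `r ⊎ s` (over valid assignments). -/
def PWinteg (r s : Set (Tup × ((Var → Bool) → Bool))) : Set (Set Tup) :=
  { A | ∃ μ : Var → Bool, ValidInteg r s μ ∧ A = world (integ r s) μ }

/-- An assignment is valid for a set of event constraints. -/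
def ValidEpr (C : Set (((Var → Bool) → Bool) × ((Var → Bool) → Bool)))
    (μ : Var → Bool) : Prop :=
  ∀ f g : (Var → Bool) → Bool, (f, g) ∈ C → f μ = g μ

/-- The possible worlds of an epr-relation `q` with event constraints `C`. -/
def PWepr (q : Set (Tup × ((Var → Bool) → Bool)))
    (C : Set (((Var → Bool) → Bool) × ((Var → Bool) → Bool))) : Set (Set Tup) :=
  { A | ∃ μ : Var → Bool, ValidEpr C μ ∧ A = world q μ }

/-- The event-variable formula `φ^r_A` of a relation `A ⊆ T(r)`:
`φ^r_A μ = true` iff `f μ = true` for every `(t, f) ∈ r` with `t ∈ A` and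
`f μ = false` for every `(t, f) ∈ r` with `t ∉ A`. -/
noncomputable def evf (r : Set (Tup × ((Var → Bool) → Bool))) (A : Set Tup) :
    (Var → Bool) → Bool :=
  fun μ => decide (∀ (t : Tup) (f : (Var → Bool) → Bool), (t, f) ∈ r → (f μ = true ↔ t ∈ A))

/-- The event-variable formula `Ξ^q_A` of `A ⊆ T(q)` for an epr-relation `q` with
event constraints `C` (conjoining all event constraints). -/
noncomputable def eevf (q : Set (Tup × ((Var → Bool) → Bool)))
    (C : Set (((Var → Bool) → Bool) × ((Var → Bool) → Bool))) (A : Set Tup) :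
    (Var → Bool) → Bool :=
  fun μ => decide (ValidEpr C μ ∧
    ∀ (t : Tup) (h : (Var → Bool) → Bool), (t, h) ∈ q → (h μ = true ↔ t ∈ A))

/-!
For a fixed set `C` of tuples, `φ^r_C ∧ φ^s_C` says that the formula of every pair of `r` or `s` is
true exactly when its tuple lies in `C`. On a common tuple this forces the two formulas to agree,
which is the event constraint; conversely, the event constraints recover the pairs of `s` that
`r ⊎ s` drops. Hence `φ^r_C ∧ φ^s_C` is `Ξ^q_C` for every `C`. Finally `φ^r_C` sees only `C ∩ T(r)`,
and compatible `A` and `B` satisfy `(A ∪ B) ∩ T(r) = A` and `(A ∪ B) ∩ T(s) = B`.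
-/

section

variable {q r s : Set (Tup × ((Var → Bool) → Bool))}
  {K : Set (((Var → Bool) → Bool) × ((Var → Bool) → Bool))}
  {T T' A B C : Set Tup} {t : Tup} {f : (Var → Bool) → Bool} {μ : Var → Bool}

lemma mem_tupleSet_of_mem (h : (t, f) ∈ q) : t ∈ tupleSet q :=
  Set.mem_image_of_mem Prod.fst h

lemma world_subset_tupleSet : world q μ ⊆ tupleSet q :=
  fun _ ⟨_, hf, _⟩ => mem_tupleSet_of_mem hf

lemma subset_tupleSet_of_mem_PW (hA : A ∈ PW q) : A ⊆ tupleSet q := by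
  obtain ⟨μ, rfl⟩ := hA
  exact world_subset_tupleSet

lemma tupleSet_integ : tupleSet (integ r s) = tupleSet r ∪ tupleSet s := by
  have tupleSet_new : tupleSet {p | p ∈ s ∧ p.1 ∉ tupleSet r} = tupleSet s \ tupleSet r :=
    Set.image_inter_preimage Prod.fst s (tupleSet r)ᶜ
  calc
    tupleSet (integ r s) = tupleSet r ∪ tupleSet {p | p ∈ s ∧ p.1 ∉ tupleSet r} :=
      Set.image_union ..
    _ = tupleSet r ∪ tupleSet s := by rw [tupleSet_new, Set.union_sdiff_self]

lemma Functional.integ (hr : Functional r) (hs : Functional s) : Functional (integ r s) := by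
  rintro t f g (hf | ⟨hf, htr⟩) (hg | ⟨hg, htr'⟩)
  · exact hr t f g hf hg
  · exact absurd (mem_tupleSet_of_mem hf) htr'
  · exact absurd (mem_tupleSet_of_mem hg) htr
  · exact hs t f g hf hg

lemma Compatible.symm (h : Compatible T T' A B) : Compatible T' T B A := by
  rw [Compatible, Set.inter_comm T' T]
  exact Eq.symm h

lemma Compatible.union_inter_eq_left (h : Compatible T T' A B) (hB : B ⊆ T') :
    (A ∪ B) ∩ T = A ∩ T := by
  have hBA : B ∩ T ⊆ A ∩ T := by
    rintro t ⟨htB, htT⟩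
    have htA : t ∈ A ∩ (T ∩ T') := Eq.symm h ▸ ⟨htB, htT, hB htB⟩
    exact ⟨htA.1, htT⟩
  rw [Set.union_inter_distrib_right, Set.union_eq_left.2 hBA]

lemma Compatible.union_inter_eq_right (h : Compatible T T' A B) (hA : A ⊆ T) :
    (A ∪ B) ∩ T' = B ∩ T' := by
  rw [Set.union_comm, h.symm.union_inter_eq_left hA]

lemma evf_eq_true_iff :
    evf q A μ = true ↔
      ∀ (t : Tup) (f : (Var → Bool) → Bool), (t, f) ∈ q → (f μ = true ↔ t ∈ A) :=
  decide_eq_true_iff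

lemma evf_congr (h : A ∩ tupleSet q = B ∩ tupleSet q) : evf q A = evf q B := by
  have mem_iff {t : Tup} (ht : t ∈ tupleSet q) : t ∈ A ↔ t ∈ B := by
    simpa only [Set.mem_inter_iff, ht, and_true] using Set.ext_iff.1 h t
  ext μ
  rw [Bool.eq_iff_iff, evf_eq_true_iff, evf_eq_true_iff]
  exact forall₃_congr fun _ _ hf => by rw [mem_iff (mem_tupleSet_of_mem hf)]

lemma Functional.evf_eq_true_iff_world_eq (hq : Functional q) (hA : A ⊆ tupleSet q) :
    evf q A μ = true ↔ world q μ = A := by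
  rw [evf_eq_true_iff]
  constructor
  · intro h
    ext t
    constructor
    · rintro ⟨f, hf, hfμ⟩
      exact (h t f hf).1 hfμ
    · intro htA
      obtain ⟨⟨t, f⟩, hf, rfl⟩ := hA htA
      exact ⟨f, hf, (h t f hf).2 htA⟩
  · rintro rfl t f hf
    refine ⟨fun hfμ => ⟨f, hf, hfμ⟩, ?_⟩
    rintro ⟨g, hg, hgμ⟩
    rwa [hq t f g hf hg]

lemma validEpr_integConstraints_iff : ValidEpr (integConstraints r s) μ ↔ ValidInteg r s μ :=
  ⟨fun h t f g hf hg => h f g ⟨t, hf, hg⟩, fun h f g ⟨t, hf, hg⟩ => h t f g hf hg⟩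

lemma eevf_eq_true_iff : eevf q K A μ = true ↔ ValidEpr K μ ∧ evf q A μ = true := by
  rw [eevf, decide_eq_true_iff, evf_eq_true_iff]

lemma validInteg_of_evf (hr : evf r C μ = true) (hs : evf s C μ = true) : ValidInteg r s μ := by
  rw [evf_eq_true_iff] at hr hs
  exact fun t f g hf hg => Bool.eq_iff_iff.2 ((hr t f hf).trans (hs t g hg).symm)

lemma ValidInteg.evf_integ_iff (hμ : ValidInteg r s μ) :
    evf (integ r s) C μ = true ↔ evf r C μ = true ∧ evf s C μ = true := by
  simp only [evf_eq_true_iff]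
  constructor
  · intro h
    refine ⟨fun t f hf => h t f (Or.inl hf), fun t g hg => ?_⟩
    by_cases htr : t ∈ tupleSet r
    · obtain ⟨⟨t, f⟩, hf, rfl⟩ := htr
      rw [← hμ t f g hf hg]
      exact h t f (Or.inl hf)
    · exact h t g (Or.inr ⟨hg, htr⟩)
  · rintro ⟨hr, hs⟩ t f (hf | ⟨hf, -⟩)
    · exact hr t f hf
    · exact hs t f hf

lemma eevf_integ :
    eevf (integ r s) (integConstraints r s) C μ = (evf r C μ && evf s C μ) := by
  rw [Bool.eq_iff_iff, eevf_eq_true_iff, validEpr_integConstraints_iff, Bool.and_eq_true]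
  calc
    ValidInteg r s μ ∧ evf (integ r s) C μ = true ↔
        ValidInteg r s μ ∧ evf r C μ = true ∧ evf s C μ = true :=
      and_congr_right ValidInteg.evf_integ_iff
    _ ↔ evf r C μ = true ∧ evf s C μ = true :=
      and_iff_right_of_imp fun ⟨hr, hs⟩ => validInteg_of_evf hr hs

lemma eevf_integ_eq_true_iff (hr : Functional r) (hs : Functional s)
    (hC : C ⊆ tupleSet r ∪ tupleSet s) :
    eevf (integ r s) (integConstraints r s) C μ = true ↔
      ValidInteg r s μ ∧ world (integ r s) μ = C := by
  rw [eevf_eq_true_iff, validEpr_integConstraints_iff,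
    (hr.integ hs).evf_eq_true_iff_world_eq (tupleSet_integ ▸ hC)]

end

theorem evf_conj_is_evf_of_union_general
    (r s : Set (Tup × ((Var → Bool) → Bool))) (hrFun : Functional r) (hsFun : Functional s)
    (A B : Set Tup) (hA : A ⊆ tupleSet r) (hB : B ⊆ tupleSet s)
    (hcomp : Compatible (tupleSet r) (tupleSet s) A B) :
    (∀ μ : Var → Bool,
      (evf r A μ && evf s B μ) = true ↔
        (ValidInteg r s μ ∧ world (integ r s) μ = A ∪ B)) ∧
    (∀ μ : Var → Bool,
      (evf r A μ && evf s B μ) = eevf (integ r s) (integConstraints r s) (A ∪ B) μ) := by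
  have conj_eq_eevf (μ : Var → Bool) :
      (evf r A μ && evf s B μ) = eevf (integ r s) (integConstraints r s) (A ∪ B) μ := by
    rw [eevf_integ, evf_congr (hcomp.union_inter_eq_left hB),
      evf_congr (hcomp.union_inter_eq_right hA)]
  refine ⟨fun μ => ?_, conj_eq_eevf⟩
  rw [conj_eq_eevf, eevf_integ_eq_true_iff hrFun hsFun (Set.union_subset_union hA hB)]

/-- Theorem: for compatible `A ∈ PW(r)` and `B ∈ PW(s)`, the conjunction
`ξ = φ^r_A ∧ ψ^s_B` is the event-variable formula of the possible world `A ∪ B` of the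
epr-relation `q = r ⊎ s`: `ξ μ = true` iff `μ` is valid for `q` and `q_μ = A ∪ B`;
equivalently, `ξ` is logically equivalent to `Ξ^q_{A ∪ B}`. -/
theorem evf_conj_is_evf_of_union
    (r s : Set (Tup × ((Var → Bool) → Bool))) (V W : Set Var)
    (hrFin : r.Finite) (hsFin : s.Finite)
    (hrFun : Functional r) (hsFun : Functional s)
    (hVW : V ∩ W = ∅)
    (hrV : ∀ (t : Tup) (f : (Var → Bool) → Bool), (t, f) ∈ r → DependsOnly f V)
    (hsW : ∀ (t : Tup) (g : (Var → Bool) → Bool), (t, g) ∈ s → DependsOnly g W)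
    (A B : Set Tup) (hAPW : A ∈ PW r) (hBPW : B ∈ PW s)
    (hcomp : Compatible (tupleSet r) (tupleSet s) A B) :
    (∀ μ : Var → Bool,
      (evf r A μ && evf s B μ) = true ↔
        (ValidInteg r s μ ∧ world (integ r s) μ = A ∪ B)) ∧
    (∀ μ : Var → Bool,
      (evf r A μ && evf s B μ) = eevf (integ r s) (integConstraints r s) (A ∪ B) μ) :=
  evf_conj_is_evf_of_union_general r s hrFun hsFun A B (subset_tupleSet_of_mem_PW hAPW)
    (subset_tupleSet_of_mem_PW hBPW) hcomp
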